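/- For every finite set {u₁, …, uₙ} of wellformed sublevels there exists a unique subset {v₁, …, vₘ} ⊆ {u₁, …, uₙ} such that {v₁, …, vₘ} is a minimal representation and for every valuation σ, max(⟦u₁⟧σ, …, ⟦uₙ⟧σ) = max(⟦v₁⟧σ, …, ⟦vₘ⟧σ) (empty maxima being 0). -/

import Mathlib

/-- The impredicative maximum on natural numbers. -/
def imaxN : ℕ → ℕ → ℕ
  | _, 0 => 0
  | i, (j+1) => max i (j+1)

/-- Sublevels A(E,x,S) and B(E,S). -/
inductive SubLvl where
  | A : Finset ℕ → ℕ → ℕ → SubLvl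
  | B : Finset ℕ → ℕ → SubLvl
deriving DecidableEq

/-- Value of a sublevel under a valuation. -/
def evalS (σ : ℕ → ℕ) : SubLvl → ℕ
  | .A E x S => if ∃ y ∈ E, σ y = 0 then 0 else σ x + S
  | .B E S => if ∃ y ∈ E, σ y = 0 then 0 else S

/-- Wellformed sublevels. -/
def Wf : SubLvl → Prop
  | .A E x _ => x ∈ E
  | .B _ S => 0 < S

/-- Semantic comparison of sublevels. -/
def leT (u v : SubLvl) : Prop := ∀ σ : ℕ → ℕ, evalS σ u ≤ evalS σ v

/-- A minimal representation: a finite set of wellformed, pairwise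
incomparable sublevels. -/
def MinRep (U : Finset SubLvl) : Prop :=
  (∀ u ∈ U, Wf u) ∧ ∀ u ∈ U, ∀ v ∈ U, u ≠ v → ¬ leT u v

/-!
Order sublevels by their value functions. On wellformed sublevels this order is decided by a
single valuation: to compare `u` with sublevels whose constants are small compared to `N`, let the
variables outside the guard of `u` vanish, set those inside to `1`, and set the variable that `u`
adds (if any) to `N`. One consequence is that the order is antisymmetric on wellformed sublevels;
another, since the maximum of a finite set at that valuation is attained, is that a wellformed
sublevel lying below a finite maximum lies below one of its members. So two minimal
representations of the same function dominate each other elementwise, and antichains with this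
property are equal. Existence is given by the maximal elements of `U`.
-/

theorem sup_filter_maximal {α β : Type*} [Preorder α] [SemilatticeSup β] [OrderBot β]
    (U : Finset α) [DecidablePred (Maximal (· ∈ U))] {f : α → β} (hf : Monotone f) :
    (U.filter (Maximal (· ∈ U))).sup f = U.sup f := by
  refine le_antisymm (Finset.sup_mono (Finset.filter_subset _ _)) (Finset.sup_le fun u hu => ?_)
  obtain ⟨m, hum, hm⟩ := U.exists_le_maximal hu
  exact (hf hum).trans (Finset.le_sup (Finset.mem_filter.2 ⟨hm.prop, hm⟩))

/-- The semantic preorder on sublevels; `u ≤ v` unfolds to `leT u v`. -/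
instance : Preorder SubLvl := Preorder.lift fun u σ => evalS σ u

theorem evalS_mono (σ : ℕ → ℕ) : Monotone (evalS σ) := fun _ _ h => h σ

theorem minRep_iff_isAntichain {U : Finset SubLvl} :
    MinRep U ↔ (∀ u ∈ U, Wf u) ∧ IsAntichain (· ≤ ·) (U : Set SubLvl) :=
  Iff.rfl

/-- The guard of a sublevel: the set `E` of variables whose vanishing makes its value `0`. -/
def SubLvl.guard : SubLvl → Finset ℕ
  | .A E _ _ => E
  | .B E _ => E

/-- The additive constant `S` of a sublevel. -/
def SubLvl.const : SubLvl → ℕ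
  | .A _ _ S => S
  | .B _ S => S

section Evaluation

variable {σ : ℕ → ℕ} {E : Finset ℕ} {x y S : ℕ} {u : SubLvl}

theorem evalS_eq_zero_of_mem_guard (hy : y ∈ u.guard) (hσ : σ y = 0) : evalS σ u = 0 := by
  cases u <;> exact if_pos ⟨y, hy, hσ⟩

theorem evalS_A_of_forall_ne_zero (hσ : ∀ y ∈ (SubLvl.A E x S).guard, σ y ≠ 0) :
    evalS σ (.A E x S) = σ x + S :=
  if_neg fun ⟨y, hy, h0⟩ => hσ y hy h0

theorem evalS_B_of_forall_ne_zero (hσ : ∀ y ∈ (SubLvl.B E S).guard, σ y ≠ 0) :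
    evalS σ (.B E S) = S :=
  if_neg fun ⟨y, hy, h0⟩ => hσ y hy h0

end Evaluation

/-- The syntactic order on sublevels, which agrees with the semantic one on wellformed
sublevels (`SubLvl.le_iff_synLE`). The bound `S ≤ T + 1` in `B_A` reflects that the variable
`y` of a wellformed `A(F,y,T)` has value at least `1` wherever the guard does not vanish. -/
inductive SubLvl.SynLE : SubLvl → SubLvl → Prop
  | A_A {E F : Finset ℕ} {S T : ℕ} (x : ℕ) : F ⊆ E → S ≤ T → SynLE (.A E x S) (.A F x T)
  | B_A {E F : Finset ℕ} {S T : ℕ} (y : ℕ) : F ⊆ E → S ≤ T + 1 → SynLE (.B E S) (.A F y T)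
  | B_B {E F : Finset ℕ} {S T : ℕ} : F ⊆ E → S ≤ T → SynLE (.B E S) (.B F T)

namespace SubLvl

variable {u v : SubLvl}

theorem SynLE.guard_subset (h : SynLE u v) : v.guard ⊆ u.guard := by
  cases h <;> assumption

theorem SynLE.antisymm (huv : SynLE u v) (hvu : SynLE v u) : u = v := by
  have hguard : u.guard = v.guard := hvu.guard_subset.antisymm huv.guard_subset
  cases huv <;> cases hvu <;> cases hguard <;> congr 1 <;> omega

theorem SynLE.le (hv : Wf v) (h : SynLE u v) : u ≤ v := by
  intro σ
  change evalS σ u ≤ evalS σ v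
  by_cases hu : ∃ y ∈ u.guard, σ y = 0
  · obtain ⟨y, hy, h0⟩ := hu
    exact (evalS_eq_zero_of_mem_guard hy h0).trans_le (Nat.zero_le _)
  push Not at hu
  have hguard : ∀ y ∈ v.guard, σ y ≠ 0 := fun y hy => hu y (h.guard_subset hy)
  cases h with
  | A_A x _ hST =>
    rw [evalS_A_of_forall_ne_zero hu, evalS_A_of_forall_ne_zero hguard]
    omega
  | B_A y _ hST =>
    have hy : σ y ≠ 0 := hguard y hv
    rw [evalS_B_of_forall_ne_zero hu, evalS_A_of_forall_ne_zero hguard]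
    omega
  | B_B _ hST => rwa [evalS_B_of_forall_ne_zero hu, evalS_B_of_forall_ne_zero hguard]

/-- The probe of a sublevel: the valuation supported on its guard with value `1` there, except that
the added variable of an `A`-sublevel gets the value `N`. Evaluating at the probe of `u` tests
whether `u` lies below a sublevel with constant small compared to `N`. -/
def probe (N : ℕ) : SubLvl → ℕ → ℕ
  | .A E x _, y => if y ∈ E then (if y = x then N else 1) else 0
  | .B E _, y => if y ∈ E then 1 else 0

section Probe

variable {N : ℕ}

theorem probe_ne_zero_iff (hN : N ≠ 0) {y : ℕ} : u.probe N y ≠ 0 ↔ y ∈ u.guard := by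
  cases u <;> simp only [probe, guard] <;> split_ifs <;> simp_all

theorem evalS_probe_A {E : Finset ℕ} {x S : ℕ} (hx : x ∈ E) (hN : N ≠ 0) :
    evalS (probe N (.A E x S)) (.A E x S) = N + S := by
  rw [evalS_A_of_forall_ne_zero fun _ => (probe_ne_zero_iff hN).2]
  simp [probe, hx]

theorem evalS_probe_B {E : Finset ℕ} {S : ℕ} (hN : N ≠ 0) :
    evalS (probe N (.B E S)) (.B E S) = S :=
  evalS_B_of_forall_ne_zero fun _ => (probe_ne_zero_iff hN).2

theorem evalS_probe_pos (hu : Wf u) (hN : N ≠ 0) : 0 < evalS (u.probe N) u := by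
  cases u with
  | A E x S => rw [evalS_probe_A hu hN]; omega
  | B E S => rwa [evalS_probe_B hN]

theorem guard_subset_of_evalS_probe_pos (hN : N ≠ 0) (h : 0 < evalS (u.probe N) v) :
    v.guard ⊆ u.guard := fun _ hy =>
  (probe_ne_zero_iff hN).1 fun h0 => h.ne' (evalS_eq_zero_of_mem_guard hy h0)

theorem synLE_of_evalS_probe_le (hu : Wf u) (hv : Wf v) (hN : v.const + 1 < N)
    (h : evalS (u.probe N) u ≤ evalS (u.probe N) v) : SynLE u v := by
  have hN0 : N ≠ 0 := by omega
  have hguard : v.guard ⊆ u.guard :=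
    guard_subset_of_evalS_probe_pos hN0 ((evalS_probe_pos hu hN0).trans_le h)
  have hprobe : ∀ y ∈ v.guard, u.probe N y ≠ 0 := fun _ hy =>
    (probe_ne_zero_iff hN0).2 (hguard hy)
  cases u with
  | A E x S =>
    rw [evalS_probe_A hu hN0] at h
    cases v with
    | A F y T =>
      have hyE : y ∈ E := hguard hv
      simp only [const] at hN
      rw [evalS_A_of_forall_ne_zero hprobe] at h
      simp only [probe, if_pos hyE] at h
      obtain rfl : y = x := by
        by_contra hyx
        rw [if_neg hyx] at h
        omega
      rw [if_pos rfl] at h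
      exact .A_A y hguard (by omega)
    | B F T =>
      simp only [const] at hN
      rw [evalS_B_of_forall_ne_zero hprobe] at h
      omega
  | B E S =>
    rw [evalS_probe_B hN0] at h
    cases v with
    | A F y T =>
      have hyE : y ∈ E := hguard hv
      rw [evalS_A_of_forall_ne_zero hprobe] at h
      simp only [probe, if_pos hyE] at h
      exact .B_A y hguard (by omega)
    | B F T =>
      rw [evalS_B_of_forall_ne_zero hprobe] at h
      exact .B_B hguard h

end Probe

theorem le_iff_synLE (hu : Wf u) (hv : Wf v) : u ≤ v ↔ SynLE u v :=
  ⟨fun h => synLE_of_evalS_probe_le hu hv (Nat.lt_succ_self _) (h _), SynLE.le hv⟩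

end SubLvl

namespace Wf

open SubLvl

variable {u v : SubLvl}

theorem le_antisymm (hu : Wf u) (hv : Wf v) (huv : u ≤ v) (hvu : v ≤ u) : u = v :=
  ((le_iff_synLE hu hv).1 huv).antisymm ((le_iff_synLE hv hu).1 hvu)

theorem exists_le_of_forall_evalS_le_sup {V : Finset SubLvl} (hu : Wf u) (hV : ∀ v ∈ V, Wf v)
    (h : ∀ σ, evalS σ u ≤ V.sup (evalS σ)) : ∃ v ∈ V, u ≤ v := by
  let N := V.sup const + 2
  obtain ⟨v, hv, huv⟩ :=
    (Finset.le_sup_iff (evalS_probe_pos hu (Nat.succ_ne_zero _))).1 (h (u.probe N))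
  have hconst : v.const + 1 < N := by
    have := Finset.le_sup (f := const) hv
    omega
  exact ⟨v, hv, (synLE_of_evalS_probe_le hu (hV v hv) hconst huv).le (hV v hv)⟩

end Wf

namespace MinRep

variable {V W : Finset SubLvl}

theorem subset_of_sup_eq (hV : MinRep V) (hW : ∀ w ∈ W, Wf w)
    (h : ∀ σ, V.sup (evalS σ) = W.sup (evalS σ)) : V ⊆ W := by
  intro v hv
  obtain ⟨w, hw, hvw⟩ : ∃ w ∈ W, v ≤ w :=
    (hV.1 v hv).exists_le_of_forall_evalS_le_sup hW fun σ => (Finset.le_sup hv).trans_eq (h σ)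
  obtain ⟨v', hv', hwv'⟩ : ∃ v' ∈ V, w ≤ v' :=
    (hW w hw).exists_le_of_forall_evalS_le_sup hV.1 fun σ =>
      (Finset.le_sup hw).trans_eq (h σ).symm
  obtain rfl : v = v' := (minRep_iff_isAntichain.1 hV).2.eq hv hv' (hvw.trans hwv')
  rwa [(hV.1 v hv).le_antisymm (hW w hw) hvw hwv']

theorem eq_of_sup_eq (hV : MinRep V) (hW : MinRep W)
    (h : ∀ σ, V.sup (evalS σ) = W.sup (evalS σ)) : V = W :=
  (hV.subset_of_sup_eq hW.1 h).antisymm (hW.subset_of_sup_eq hV.1 fun σ => (h σ).symm)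

end MinRep

theorem minRep_filter_maximal {U : Finset SubLvl} [DecidablePred (Maximal (· ∈ U))]
    (hU : ∀ u ∈ U, Wf u) : MinRep (U.filter (Maximal (· ∈ U))) := by
  refine minRep_iff_isAntichain.2 ⟨fun u hu => hU u (Finset.mem_of_mem_filter u hu), ?_⟩
  intro u hu v hv hne huv
  have hmax_u : Maximal (· ∈ U) u := (Finset.mem_filter.1 hu).2
  have hmax_v : Maximal (· ∈ U) v := (Finset.mem_filter.1 hv).2
  exact hne ((hU u hmax_u.prop).le_antisymm (hU v hmax_v.prop) huv
    (hmax_u.le_of_ge hmax_v.prop huv))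

theorem exists_unique_minrep_subset (U : Finset SubLvl) (hU : ∀ u ∈ U, Wf u) :
    ∃! V : Finset SubLvl, V ⊆ U ∧ MinRep V ∧
      ∀ σ : ℕ → ℕ, U.sup (evalS σ) = V.sup (evalS σ) := by
  classical
  have hsup (σ : ℕ → ℕ) := sup_filter_maximal U (evalS_mono σ)
  refine ⟨U.filter (Maximal (· ∈ U)),
    ⟨Finset.filter_subset _ _, minRep_filter_maximal hU, fun σ => (hsup σ).symm⟩, ?_⟩
  rintro W ⟨-, hW, hUW⟩
  exact hW.eq_of_sup_eq (minRep_filter_maximal hU) fun σ => (hUW σ).symm.trans (hsup σ).symm
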